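/- Let (ψ, N) be a hypersurface of M^n(C), let V be a concircular vector field on M^n(C) with concircular factor μ, and let λ : U → ℝ be a smooth nowhere-zero function such that V(ψ(u)) = λ(u)·N(u) for all u ∈ U. Then λ is constant on U, μ∘ψ is constant on U, and setting m = −(μ∘ψ)/λ, the hypersurface is totally umbilical: dN_u(w) = −m·dψ_u(w) for all u ∈ U and all w ∈ ℝ^{n−1}. -/

import Mathlib

/-!
Write `C = ε / R²`. Differentiating `V ∘ ψ = λ N` along `w` and using the concircular equation (whose
normal term `C ⟨dψ w, V⟩ ψ` vanishes, because `V` is parallel to `N`) gives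
`μ dψ(w) = dλ(w) N + λ dN(w)`. Pairing with `N` yields `dλ = 0`, and then `dN(w) = (μ / λ) dψ(w)`.

That `μ ∘ ψ` is constant does not follow from the hypersurface alone when `n = 2`: it uses the
concircular equation on all of `M^n(C)`, through `dμ(X) = -C ⟨X, V⟩` for tangent `X`
(`fderiv_factor`), an identity that vanishes on vectors tangent to the hypersurface.
To prove it, put `a(p) = V(p) - μ(p) p`. The concircular equation says
`da(w) = -(C ⟨w, V⟩ + dμ(w)) p`, i.e. `da = θ ⊗ p` for a 1-form `θ`. Extending `a` to a
neighbourhood in `ℝ^{n+1}` by composing with the radial retraction onto `M^n(C)`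
(`exists_retraction`), symmetry of the second derivative gives `θ(X) Y - θ(Y) X ∈ ℝ p` for tangent
`X, Y`; pairing with a unit `Y` orthogonal to `X` leaves `θ(X) = 0`. On the hypersurface, `Y = N`.
-/

/-- The bilinear form ⟨x,y⟩ = ε x₁y₁ + x₂y₂ + ⋯ on ℝ^m. -/
noncomputable def form (ε : ℝ) {m : ℕ} [NeZero m] (x y : Fin m → ℝ) : ℝ :=
  (ε - 1) * (x 0 * y 0) + ∑ i, x i * y i

/-- The space form M^n(C), C = ε/R². -/
def SpaceForm (ε R : ℝ) (n : ℕ) : Set (Fin (n + 1) → ℝ) :=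
  {p | form ε p p = 1 / (ε / R ^ 2) ∧ (ε = -1 → 0 < p 0)}

open scoped Topology

section FormAlgebra

variable {m : ℕ} [NeZero m] (ε : ℝ)

lemma form_comm (x y : Fin m → ℝ) : form ε x y = form ε y x := by
  simp only [form, mul_comm]

lemma form_add_left (x y z : Fin m → ℝ) : form ε (x + y) z = form ε x z + form ε y z := by
  simp only [form, Pi.add_apply, add_mul, Finset.sum_add_distrib]; ring

lemma form_smul_left (c : ℝ) (x z : Fin m → ℝ) : form ε (c • x) z = c * form ε x z := by
  simp only [form, Pi.smul_apply, smul_eq_mul, mul_add, Finset.mul_sum, mul_assoc]; ring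

lemma form_add_right (x y z : Fin m → ℝ) : form ε x (y + z) = form ε x y + form ε x z := by
  rw [form_comm, form_add_left, form_comm ε y, form_comm ε z]

lemma form_smul_right (c : ℝ) (x z : Fin m → ℝ) : form ε x (c • z) = c * form ε x z := by
  rw [form_comm, form_smul_left, form_comm]

/-- `form` as a continuous bilinear map, so that the product rule applies to it. -/
noncomputable def formB (m : ℕ) [NeZero m] : (Fin m → ℝ) →L[ℝ] (Fin m → ℝ) →L[ℝ] ℝ :=
  (LinearMap.mk₂ ℝ (form ε) (form_add_left ε) (form_smul_left ε) (form_add_right ε)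
    (form_smul_right ε)).toContinuousBilinearMap

lemma formB_apply (x y : Fin m → ℝ) : formB ε m x y = form ε x y := rfl

variable {E : Type*} [NormedAddCommGroup E] [NormedSpace ℝ E] {f g : E → Fin m → ℝ} {x : E}

lemma ContDiffAt.form {k : WithTop ℕ∞} (hf : ContDiffAt ℝ k f x) (hg : ContDiffAt ℝ k g x) :
    ContDiffAt ℝ k (fun y => form ε (f y) (g y)) x :=
  ((formB ε m).contDiff.contDiffAt.comp x hf).clm_apply hg

lemma fderiv_form (hf : DifferentiableAt ℝ f x) (hg : DifferentiableAt ℝ g x) (w : E) :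
    fderiv ℝ (fun y => form ε (f y) (g y)) x w
      = form ε (f x) (fderiv ℝ g x w) + form ε (fderiv ℝ f x w) (g x) := by
  have h := DFunLike.congr_fun ((formB ε m).fderiv_of_bilinear hf hg) w
  simpa [formB_apply] using h

end FormAlgebra

/-- The radial projection `x ↦ √(R² / (ε ⟨x, x⟩)) x` is a smooth retraction of a neighbourhood of
`p` onto the space form, and its derivative at `p` fixes tangent vectors. -/
lemma exists_retraction {n : ℕ} {ε R : ℝ} (hε : ε = 1 ∨ ε = -1) (hR : 0 < R)
    {p : Fin (n + 1) → ℝ} (hp : p ∈ SpaceForm ε R n) :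
    ∃ ρ : (Fin (n + 1) → ℝ) → (Fin (n + 1) → ℝ), ContDiffAt ℝ 3 ρ p ∧ ρ p = p ∧
      (∀ᶠ x in 𝓝 p, ρ x ∈ SpaceForm ε R n) ∧
      ∀ X, form ε X p = 0 → fderiv ℝ ρ p X = X := by
  have hε2 : ε * ε = 1 := by rcases hε with rfl | rfl <;> norm_num
  have hε0 : ε ≠ 0 := by rintro rfl; norm_num at hε2
  have hK : form ε p p = ε * R ^ 2 := by
    rw [hp.1]; field_simp; linear_combination -hε2
  have hQ : ε * form ε p p = R ^ 2 := by rw [hK, ← mul_assoc, hε2, one_mul]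
  have hQs : ContDiffAt ℝ 3 (fun x : Fin (n + 1) → ℝ => ε * form ε x x) p :=
    contDiffAt_const.mul (contDiffAt_id.form ε contDiffAt_id)
  have hQ0 : 0 < ε * form ε p p := by rw [hQ]; positivity
  set c : (Fin (n + 1) → ℝ) → ℝ := fun x => √(R ^ 2 / (ε * form ε x x)) with hc
  have hcp : c p = 1 := by
    simp only [hc, hQ]; rw [div_self (by positivity), Real.sqrt_one]
  have hcs : ContDiffAt ℝ 3 c p :=
    (contDiffAt_const.div hQs hQ0.ne').sqrt (div_pos (by positivity) hQ0).ne'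
  have hρs : ContDiffAt ℝ 3 (fun x => c x • x) p := hcs.smul contDiffAt_id
  have hmem : ∀ᶠ x in 𝓝 p, c x • x ∈ SpaceForm ε R n := by
    have h0 : ∀ᶠ x : Fin (n + 1) → ℝ in 𝓝 p, ε = -1 → 0 < x 0 := by
      by_cases h : ε = -1
      · filter_upwards [(continuous_apply 0).continuousAt.eventually (lt_mem_nhds (hp.2 h))]
          with x hx _ using hx
      · exact Filter.Eventually.of_forall fun x hx => absurd hx h
    filter_upwards [hQs.continuousAt.eventually (lt_mem_nhds hQ0), h0] with x hx hx0
    have hfx : form ε x x ≠ 0 := by rintro h; simp [h] at hx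
    refine ⟨?_, fun h => ?_⟩
    · rw [form_smul_left, form_smul_right, ← mul_assoc, Real.mul_self_sqrt (by positivity)]
      field_simp
    · exact mul_pos (Real.sqrt_pos.2 (by positivity)) (hx0 h)
  refine ⟨fun x => c x • x, hρs, by simp [hcp], hmem, fun X hX => ?_⟩
  have hfd : fderiv ℝ (fun x => c x • x) p X = X + (fderiv ℝ c p X) • p := by
    rw [fderiv_fun_smul (hcs.differentiableAt (by norm_num)) differentiableAt_fun_id]
    simp [hcp]
  -- The component along `p` vanishes because `⟨ρ, ρ⟩` is constant near `p`.
  have hconst : (fun x => form ε (c x • x) (c x • x)) =ᶠ[𝓝 p] fun _ => 1 / (ε / R ^ 2) :=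
    hmem.mono fun x hx => hx.1
  have hd := fderiv_form ε (hρs.differentiableAt (by norm_num))
    (hρs.differentiableAt (by norm_num)) X
  rw [hconst.fderiv_eq, hfd, hcp, one_smul, form_add_right, form_add_left, form_smul_left,
    form_smul_right, form_comm ε p X, hX, hK] at hd
  have hR2 : ε * R ^ 2 ≠ 0 := by positivity
  have hd' : fderiv ℝ c p X * (ε * R ^ 2) = 0 := by
    simp at hd; linarith
  rw [hfd, (mul_eq_zero.1 hd').resolve_right hR2, zero_smul, add_zero]

/-- `dμ(X) = -C ⟨X, V⟩` at `p`, whenever some unit tangent vector `Y` is orthogonal to `X`: the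
integrability condition of the concircular equation. -/
lemma fderiv_factor {n : ℕ} {ε R : ℝ} (hε : ε = 1 ∨ ε = -1) (hR : 0 < R)
    {V : (Fin (n + 1) → ℝ) → (Fin (n + 1) → ℝ)} {μ : (Fin (n + 1) → ℝ) → ℝ}
    (hV : ContDiff ℝ (⊤ : ℕ∞) V) (hμ : ContDiff ℝ (⊤ : ℕ∞) μ)
    (hconc : ∀ p ∈ SpaceForm ε R n, ∀ w : Fin (n + 1) → ℝ, form ε w p = 0 →
      fderiv ℝ V p w = μ p • w - ((ε / R ^ 2) * form ε w (V p)) • p)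
    {p X Y : Fin (n + 1) → ℝ} (hp : p ∈ SpaceForm ε R n) (hX : form ε X p = 0)
    (hY : form ε Y p = 0) (hXY : form ε X Y = 0) (hYY : form ε Y Y = 1) :
    fderiv ℝ μ p X = -((ε / R ^ 2) * form ε X (V p)) := by
  obtain ⟨ρ, hρs, hρp, hρM, hρd⟩ := exists_retraction hε hR hp
  have hC : ε / R ^ 2 ≠ 0 := by
    have : ε ≠ 0 := by rcases hε with rfl | rfl <;> norm_num
    positivity
  have hVd : Differentiable ℝ V := hV.differentiable (by simp)
  have hμd : Differentiable ℝ μ := hμ.differentiable (by simp)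
  -- The field `a = V - μ · id`, extended off the space form by the retraction.
  set G : (Fin (n + 1) → ℝ) → (Fin (n + 1) → ℝ) := fun x => V (ρ x) - μ (ρ x) • ρ x with hG
  have hV3 : ContDiff ℝ 3 V := contDiff_infty.1 hV 3
  have hμ3 : ContDiff ℝ 3 μ := contDiff_infty.1 hμ 3
  have hGs : ContDiffAt ℝ 3 G p :=
    (hV3.contDiffAt.comp p hρs).sub ((hμ3.contDiffAt.comp p hρs).smul hρs)
  have hGd : ∀ᶠ x in 𝓝 p, ∀ v, fderiv ℝ G x v =
      (-((ε / R ^ 2) * form ε (fderiv ℝ ρ x v) (V (ρ x)) + fderiv ℝ μ (ρ x) (fderiv ℝ ρ x v)))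
        • ρ x := by
    filter_upwards [hρM.eventually_nhds, hρs.eventually (by norm_num)] with x hxM hxs v
    have hρx : DifferentiableAt ℝ ρ x := hxs.differentiableAt (by norm_num)
    have htan : form ε (fderiv ℝ ρ x v) (ρ x) = 0 := by
      have hconst : (fun y => form ε (ρ y) (ρ y)) =ᶠ[𝓝 x] fun _ => 1 / (ε / R ^ 2) :=
        hxM.mono fun y hy => hy.1
      have hd := fderiv_form ε hρx hρx v
      rw [hconst.fderiv_eq, form_comm ε (ρ x)] at hd
      simp at hd; linarith
    have h1 : HasFDerivAt (fun y => V (ρ y)) ((fderiv ℝ V (ρ x)).comp (fderiv ℝ ρ x)) x :=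
      (hVd _).hasFDerivAt.comp x hρx.hasFDerivAt
    have h2 : HasFDerivAt (fun y => μ (ρ y)) ((fderiv ℝ μ (ρ x)).comp (fderiv ℝ ρ x)) x :=
      (hμd _).hasFDerivAt.comp x hρx.hasFDerivAt
    have hGx : HasFDerivAt G _ x := h1.sub (h2.smul hρx.hasFDerivAt)
    rw [hGx.fderiv]
    simp [hconc _ hxM.self_of_nhds _ htan]
    module
  -- `dG(v)` is a multiple of `ρ`, with a coefficient that is recovered by pairing with `ρ`; this
  -- makes its differentiability visible.
  set T : (Fin (n + 1) → ℝ) → (Fin (n + 1) → ℝ) → ℝ :=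
    fun v x => (ε / R ^ 2) * form ε (fderiv ℝ G x v) (ρ x) with hT
  have hGT : ∀ v, (fun x => fderiv ℝ G x v) =ᶠ[𝓝 p] fun x => T v x • ρ x := by
    intro v
    filter_upwards [hGd, hρM] with x hx hxM
    simp only [hT]
    rw [hx v, form_smul_left, hxM.1, mul_left_comm, mul_one_div_cancel hC, mul_one]
  have hρ1 : DifferentiableAt ℝ ρ p := hρs.differentiableAt (by norm_num)
  have hG1 : DifferentiableAt ℝ (fderiv ℝ G) p :=
    (hGs.fderiv_right (m := 2) (by norm_num)).differentiableAt (by norm_num)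
  have hGv : ∀ v, ContDiffAt ℝ 2 (fun x => fderiv ℝ G x v) p := fun v =>
    (hGs.fderiv_right (m := 2) (by norm_num)).clm_apply contDiffAt_const
  have hTd : ∀ v, DifferentiableAt ℝ (T v) p := fun v =>
    (contDiffAt_const.mul ((hGv v).form ε (hρs.of_le (by norm_num)))).differentiableAt
      (by norm_num : (2 : WithTop ℕ∞) ≠ 0)
  have hsnd : ∀ v w, form ε w p = 0 →
      fderiv ℝ (fderiv ℝ G) p w v = T v p • w + (fderiv ℝ (T v) p w) • p := by
    intro v w hw
    have h := (hGT v).fderiv_eq (𝕜 := ℝ)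
    rw [fderiv_fun_smul (hTd v) hρ1, fderiv_clm_apply hG1 (differentiableAt_const v)] at h
    have h' := DFunLike.congr_fun h w
    simpa [hρd w hw, hρp] using h'
  have hsymm := hGs.isSymmSndFDerivAt (by simp; norm_num) X Y
  rw [hsnd Y X hX, hsnd X Y hY] at hsymm
  have hpair := congrArg (fun z => form ε z Y) hsymm
  simp only [form_add_left, form_smul_left, form_comm ε p Y, hY, hXY, hYY] at hpair
  have hTX : T X p = 0 := by linarith
  have hpp : form ε p p ≠ 0 := by rw [hp.1]; exact one_div_ne_zero hC
  simp only [hT, hGd.self_of_nhds X, hρp, hρd X hX, form_smul_left, mul_eq_zero, hC, hpp,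
    or_false, false_or] at hTX
  linarith

/-- If the restriction of a concircular vector field `V` to a hypersurface (ψ, N) of
M^n(C) is a nowhere-zero multiple λ of the unit normal N, then λ is constant, μ∘ψ is
constant, and the hypersurface is totally umbilical with dN = -m·dψ, m = -(μ∘ψ)/λ. -/
theorem concircular_parallel_to_normal_implies_totally_umbilical
    (n : ℕ) (hn : 2 ≤ n) (ε R : ℝ) (hε : ε = 1 ∨ ε = -1) (hR : 0 < R)
    (U : Set (Fin (n - 1) → ℝ)) (hUo : IsOpen U) (hUc : IsPreconnected U)
    (ψ N : (Fin (n - 1) → ℝ) → (Fin (n + 1) → ℝ))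
    (hψ : ContDiffOn ℝ (⊤ : ℕ∞) ψ U) (hN : ContDiffOn ℝ (⊤ : ℕ∞) N U)
    (himm : ∀ u ∈ U, Function.Injective (fderiv ℝ ψ u))
    (hψM : ∀ u ∈ U, ψ u ∈ SpaceForm ε R n)
    (hNunit : ∀ u ∈ U, form ε (N u) (N u) = 1)
    (hNψ : ∀ u ∈ U, form ε (N u) (ψ u) = 0)
    (hNtan : ∀ u ∈ U, ∀ w : Fin (n - 1) → ℝ, form ε (N u) (fderiv ℝ ψ u w) = 0)
    (V : (Fin (n + 1) → ℝ) → (Fin (n + 1) → ℝ)) (μ : (Fin (n + 1) → ℝ) → ℝ)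
    (hV : ContDiff ℝ (⊤ : ℕ∞) V) (hμ : ContDiff ℝ (⊤ : ℕ∞) μ)
    (htan : ∀ p ∈ SpaceForm ε R n, form ε (V p) p = 0)
    (hconc : ∀ p ∈ SpaceForm ε R n, ∀ w : Fin (n + 1) → ℝ, form ε w p = 0 →
      fderiv ℝ V p w = μ p • w - ((ε / R ^ 2) * form ε w (V p)) • p)
    (lam : (Fin (n - 1) → ℝ) → ℝ)
    (hlam : ContDiffOn ℝ (⊤ : ℕ∞) lam U) (hlam0 : ∀ u ∈ U, lam u ≠ 0)
    (hVN : ∀ u ∈ U, V (ψ u) = lam u • N u) :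
    (∀ u ∈ U, ∀ v ∈ U, lam u = lam v) ∧
    (∀ u ∈ U, ∀ v ∈ U, μ (ψ u) = μ (ψ v)) ∧
    (∀ u ∈ U, ∀ w : Fin (n - 1) → ℝ,
      fderiv ℝ N u w = -(-(μ (ψ u)) / lam u) • fderiv ℝ ψ u w) := by
  have hderivs : ∀ u ∈ U, DifferentiableAt ℝ ψ u ∧ DifferentiableAt ℝ N u ∧
      DifferentiableAt ℝ lam u := fun u hu =>
    ⟨(hψ.contDiffAt (hUo.mem_nhds hu)).differentiableAt (by simp),
      (hN.contDiffAt (hUo.mem_nhds hu)).differentiableAt (by simp),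
      (hlam.contDiffAt (hUo.mem_nhds hu)).differentiableAt (by simp)⟩
  have hψtan : ∀ u ∈ U, ∀ w, form ε (fderiv ℝ ψ u w) (ψ u) = 0 := by
    intro u hu w
    have hconst : (fun y => form ε (ψ y) (ψ y)) =ᶠ[𝓝 u] fun _ => 1 / (ε / R ^ 2) := by
      filter_upwards [hUo.mem_nhds hu] with y hy using (hψM y hy).1
    have hd := fderiv_form ε (hderivs u hu).1 (hderivs u hu).1 w
    rw [hconst.fderiv_eq, form_comm ε (ψ u)] at hd
    simp at hd; linarith
  have hNN : ∀ u ∈ U, ∀ w, form ε (fderiv ℝ N u w) (N u) = 0 := by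
    intro u hu w
    have hconst : (fun y => form ε (N y) (N y)) =ᶠ[𝓝 u] fun _ => 1 := by
      filter_upwards [hUo.mem_nhds hu] with y hy using hNunit y hy
    have hd := fderiv_form ε (hderivs u hu).2.1 (hderivs u hu).2.1 w
    rw [hconst.fderiv_eq, form_comm ε (N u)] at hd
    simp at hd; linarith
  have hVψ : ∀ u ∈ U, ∀ w, form ε (fderiv ℝ ψ u w) (V (ψ u)) = 0 := by
    intro u hu w
    rw [hVN u hu, form_smul_right, form_comm, hNtan u hu, mul_zero]
  have hVd : Differentiable ℝ V := hV.differentiable (by simp)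
  have hμd : Differentiable ℝ μ := hμ.differentiable (by simp)
  have hkey : ∀ u ∈ U, ∀ w, μ (ψ u) • fderiv ℝ ψ u w =
      lam u • fderiv ℝ N u w + (fderiv ℝ lam u w) • N u := by
    intro u hu w
    obtain ⟨hψu, hNu, hlu⟩ := hderivs u hu
    have hev : (fun y => V (ψ y)) =ᶠ[𝓝 u] fun y => lam y • N y := by
      filter_upwards [hUo.mem_nhds hu] with y hy using hVN y hy
    have h1 : HasFDerivAt (fun y => V (ψ y)) ((fderiv ℝ V (ψ u)).comp (fderiv ℝ ψ u)) u :=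
      (hVd _).hasFDerivAt.comp u hψu.hasFDerivAt
    have h := hev.fderiv_eq (𝕜 := ℝ)
    rw [h1.fderiv, fderiv_fun_smul hlu hNu] at h
    have h' := DFunLike.congr_fun h w
    simpa [hconc _ (hψM u hu) _ (hψtan u hu w), hVψ u hu w] using h'
  have hdlam : ∀ u ∈ U, ∀ w, fderiv ℝ lam u w = 0 := by
    intro u hu w
    have h := congrArg (fun z => form ε z (N u)) (hkey u hu w)
    simp only [form_add_left, form_smul_left, hNN u hu, hNunit u hu,
      form_comm ε (fderiv ℝ ψ u w), hNtan u hu] at h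
    linarith
  refine ⟨fun u hu v hv => ?_, fun u hu v hv => ?_, fun u hu w => ?_⟩
  · exact hUo.is_const_of_fderiv_eq_zero hUc
      (fun x hx => (hderivs x hx).2.2.differentiableWithinAt)
      (fun x hx => ContinuousLinearMap.ext (hdlam x hx)) hu hv
  · have hd : ∀ x ∈ U, HasFDerivAt (fun y => μ (ψ y))
        ((fderiv ℝ μ (ψ x)).comp (fderiv ℝ ψ x)) x := fun x hx =>
      (hμd _).hasFDerivAt.comp x (hderivs x hx).1.hasFDerivAt
    refine hUo.is_const_of_fderiv_eq_zero (𝕜 := ℝ) (f := fun y => μ (ψ y)) hUc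
      (fun x hx => (hd x hx).differentiableAt.differentiableWithinAt)
      (fun x hx => ContinuousLinearMap.ext fun w => ?_) hu hv
    rw [(hd x hx).fderiv]
    have h := fderiv_factor hε hR hV hμ hconc (hψM x hx) (hψtan x hx w) (hNψ x hx)
      ((form_comm _ _ _).trans (hNtan x hx w)) (hNunit x hx)
    simp [h, hVψ x hx w]
  · have h := hkey u hu w
    rw [hdlam u hu w, zero_smul, add_zero] at h
    rw [neg_div, neg_neg, div_eq_inv_mul, mul_smul, h, smul_smul, inv_mul_cancel₀ (hlam0 u hu),
      one_smul]
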